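/- Let M, N ⊆ 𝔼 and let u be an embedding of D_M into D_N. Then u({d}) = {d}. -/

import Mathlib

/-!
Put `T = ◇⁴{d}` in `D_M` and `X = u {d}`. Since `T ≠ W` and `u` is injective,
`u T = ◇⁴X ≠ W`, so some vertex `y` has distance at least `5` from every point of `X`.
Every vertex other than `d` is within distance `2` of `a`, and `d` is within distance `3` of `a`.
Hence two vertices at distance at least `5` must include `d`:

* if `d ∈ X`, then `y ≠ d`, so every point of `X` is at distance `3` from `a`, i.e. `X = {d}`;
* if `d ∉ X`, then every such `y` is `d`, i.e. `u Tᶜ ⊆ {d}`.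

The second case is impossible: `Tᶜ = {c₂} ∪ {uᵢ : i ≥ 1}` is not an atom of `D_M`. Indeed
`P = {b₃, ℓ₀}` is the set of vertices at distance `4` from `d` that see no vertex of `Tᶜ`, and
`◇◇P` contains `u₁` but not `c₂`. So `Tᶜ` is a union of two disjoint nonempty members of `D_M`,
whose images would be disjoint nonempty subsets of `{d}`.
-/

/-- Vertices of the frame `𝔽_N`.  `u n` denotes the vertex `u_{n+1}` of the paper
(so that `u 0, u 1, …` enumerate `u₁, u₂, …`), and `l n` denotes `ℓ_n`. -/
inductive V : Type
  | a | b1 | b2 | b3 | c1 | c2 | d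
  | u (n : ℕ)
  | l (n : ℕ)
  deriving DecidableEq

/-- `𝔼`, the set of positive even integers. -/
def EE : Set ℕ := {n | Even n ∧ 0 < n}

/-- The edges of the frame `𝔽_N` (one direction of each edge; loops are added in `R`).
Recall that `V.u n` denotes `u_{n+1}`. -/
inductive E (N : Set ℕ) : V → V → Prop
  | ab1 : E N .a .b1
  | ab2 : E N .a .b2
  | ab3 : E N .a .b3
  | b1c1 : E N .b1 .c1
  | b2c2 : E N .b2 .c2
  | c1d : E N .c1 .d
  | l0l1 : E N (.l 0) (.l 1)
  /-- `{a, ℓᵢ}` for every `i ≥ 0` -/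
  | al (i : ℕ) : E N .a (.l i)
  /-- `{ℓᵢ, uᵢ}` for every `i ≥ 1` (here `i = j + 1`) -/
  | lu (j : ℕ) : E N (.l (j + 1)) (.u j)
  /-- `{ℓᵢ, u_{i-1}}` for every even `i ≥ 2` (here `i = j + 2`) -/
  | ldown (j : ℕ) (hj : Even j) : E N (.l (j + 2)) (.u j)
  /-- `{ℓᵢ, u_{i+1}}` for every `i ∈ N` -/
  | lN (i : ℕ) (hi : i ∈ N) : E N (.l i) (.u i)
  /-- `{ℓ_{i+1}, uᵢ}` for every even `i ≥ 2` with `i ∉ N` (here `i = j + 2`) -/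
  | lnN (j : ℕ) (hj : Even j) (hjN : j + 2 ∉ N) : E N (.l (j + 3)) (.u (j + 1))

/-- The accessibility relation `R_N`: the reflexive symmetric closure of the edges. -/
def R (N : Set ℕ) (x y : V) : Prop := x = y ∨ E N x y ∨ E N y x

/-- `◇_N X = {w : ∃ v ∈ X, v R_N w}`. -/
def dia (N : Set ℕ) (X : Set V) : Set V := {w | ∃ v ∈ X, R N v w}

/-- `D_N`: the smallest collection of subsets of `W` containing `{d}` and closed under
union, complement and `◇_N`. -/
inductive DN (N : Set ℕ) : Set V → Prop
  | base : DN N {V.d}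
  | union {X Y : Set V} : DN N X → DN N Y → DN N (X ∪ Y)
  | compl {X : Set V} : DN N X → DN N Xᶜ
  | diam {X : Set V} : DN N X → DN N (dia N X)

/-- An embedding of the algebra `D_M` into the algebra `D_N`: a map defined on `D_M`,
taking values in `D_N`, injective on `D_M`, preserving `∅`, `W`, union, complement
and `◇`. -/
def IsEmbedding (M N : Set ℕ) (u : Set V → Set V) : Prop :=
  (∀ X : Set V, DN M X → DN N (u X)) ∧
  (∀ X Y : Set V, DN M X → DN M Y → u X = u Y → X = Y) ∧
  u ∅ = ∅ ∧
  u Set.univ = Set.univ ∧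
  (∀ X Y : Set V, DN M X → DN M Y → u (X ∪ Y) = u X ∪ u Y) ∧
  (∀ X : Set V, DN M X → u Xᶜ = (u X)ᶜ) ∧
  (∀ X : Set V, DN M X → u (dia M X) = dia N (u X))

/-! ### Distances from `d` and from `a` -/

/-- The distance of a vertex from `d`. -/
def distD : V → ℕ
  | .d => 0 | .c1 => 1 | .b1 => 2 | .a => 3
  | .b2 => 4 | .b3 => 4 | .l _ => 4
  | .c2 => 5 | .u _ => 5

/-- The distance of a vertex from `a`. -/
def distA : V → ℕ
  | .a => 0 | .b1 => 1 | .b2 => 1 | .b3 => 1 | .l _ => 1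
  | .c1 => 2 | .c2 => 2 | .u _ => 2 | .d => 3

lemma R.symm {N : Set ℕ} {x y : V} (h : R N x y) : R N y x := by
  rcases h with h | h | h
  · exact .inl h.symm
  · exact .inr (.inr h)
  · exact .inr (.inl h)

lemma distD_le_of_R {N : Set ℕ} {x y : V} (h : R N x y) : distD y ≤ distD x + 1 := by
  rcases h with rfl | h | h
  · omega
  · cases h <;> simp [distD]
  · cases h <;> simp [distD]

lemma exists_R_distD (N : Set ℕ) (y : V) (hy : y ≠ .d) :
    ∃ x, R N x y ∧ distD y = distD x + 1 := by
  cases y with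
  | a => exact ⟨.b1, .inr (.inr .ab1), rfl⟩
  | b1 => exact ⟨.c1, .inr (.inr .b1c1), rfl⟩
  | b2 => exact ⟨.a, .inr (.inl .ab2), rfl⟩
  | b3 => exact ⟨.a, .inr (.inl .ab3), rfl⟩
  | c1 => exact ⟨.d, .inr (.inr .c1d), rfl⟩
  | c2 => exact ⟨.b2, .inr (.inl .b2c2), rfl⟩
  | d => exact absurd rfl hy
  | u n => exact ⟨.l (n + 1), .inr (.inl (.lu n)), rfl⟩
  | l n => exact ⟨.a, .inr (.inl (.al n)), rfl⟩

lemma exists_R_distA (N : Set ℕ) (y : V) (hy : y ≠ .a) :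
    ∃ x, R N x y ∧ distA y = distA x + 1 := by
  cases y with
  | a => exact absurd rfl hy
  | b1 => exact ⟨.a, .inr (.inl .ab1), rfl⟩
  | b2 => exact ⟨.a, .inr (.inl .ab2), rfl⟩
  | b3 => exact ⟨.a, .inr (.inl .ab3), rfl⟩
  | c1 => exact ⟨.b1, .inr (.inl .b1c1), rfl⟩
  | c2 => exact ⟨.b2, .inr (.inl .b2c2), rfl⟩
  | d => exact ⟨.c1, .inr (.inl .c1d), rfl⟩
  | u n => exact ⟨.l (n + 1), .inr (.inl (.lu n)), rfl⟩
  | l n => exact ⟨.a, .inr (.inl (.al n)), rfl⟩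

lemma dia_iterate_singleton_d (N : Set ℕ) (k : ℕ) :
    (dia N)^[k] {V.d} = {w | distD w ≤ k} := by
  induction k with
  | zero =>
    ext w
    cases w <;> simp [distD]
  | succ k ih =>
    rw [Function.iterate_succ_apply', ih]
    ext w
    constructor
    · rintro ⟨v, hv, hR⟩
      have h := distD_le_of_R hR
      simp only [Set.mem_ofPred_eq] at hv ⊢
      omega
    · intro hw
      simp only [Set.mem_ofPred_eq] at hw
      by_cases hd : w = .d
      · subst hd
        exact ⟨.d, by simp [distD], .inl rfl⟩
      · obtain ⟨x, hx, he⟩ := exists_R_distD N w hd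
        exact ⟨x, by simp only [Set.mem_ofPred_eq]; omega, hx⟩

lemma subset_dia (N : Set ℕ) (X : Set V) : X ⊆ dia N X :=
  fun x hx => ⟨x, hx, .inl rfl⟩

lemma dia_iterate_mono (N : Set ℕ) (X : Set V) : Monotone fun k => (dia N)^[k] X :=
  monotone_nat_of_le_succ fun k => by
    simp only [Function.iterate_succ_apply']
    exact subset_dia N _

lemma a_mem_dia_iterate (N : Set ℕ) (k : ℕ) :
    ∀ (X : Set V) (x : V), x ∈ X → distA x = k → V.a ∈ (dia N)^[k] X := by
  induction k with
  | zero =>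
    intro X x hx h
    cases x <;> simp_all [distA]
  | succ k ih =>
    intro X x hx h
    obtain ⟨z, hz, he⟩ := exists_R_distA N x (by rintro rfl; simp [distA] at h)
    rw [Function.iterate_succ_apply]
    exact ih _ z ⟨x, hx, hz.symm⟩ (by omega)

lemma mem_dia_iterate_of_a_mem (N : Set ℕ) (X : Set V) (ha : V.a ∈ X) (k : ℕ) :
    ∀ y : V, distA y = k → y ∈ (dia N)^[k] X := by
  induction k with
  | zero =>
    intro y h
    cases y <;> simp_all [distA]
  | succ k ih =>
    intro y h
    obtain ⟨z, hz, he⟩ := exists_R_distA N y (by rintro rfl; simp [distA] at h)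
    rw [Function.iterate_succ_apply']
    exact ⟨z, ih z (by omega), hz⟩

/-- Triangle inequality through `a`. -/
lemma five_le_distA_add {N : Set ℕ} {X : Set V} {x y : V} (hx : x ∈ X)
    (hy : y ∉ (dia N)^[4] X) : 5 ≤ distA x + distA y := by
  by_contra! h
  have h1 := mem_dia_iterate_of_a_mem N _ (a_mem_dia_iterate N _ X x hx rfl) _ y rfl
  rw [← Function.iterate_add_apply] at h1
  exact hy (dia_iterate_mono N X (by omega : distA y + distA x ≤ 4) h1)

lemma distA_le_two {x : V} (h : x ≠ .d) : distA x ≤ 2 := by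
  cases x <;> simp_all [distA]

/-! ### Members of `D_N` -/

lemma DN.empty (N : Set ℕ) : DN N ∅ := by
  have h := (DN.union (DN.base (N := N)) (DN.compl DN.base)).compl
  rwa [Set.union_compl_self, Set.compl_univ] at h

lemma DN.inter {N : Set ℕ} {X Y : Set V} (hX : DN N X) (hY : DN N Y) : DN N (X ∩ Y) := by
  have h := (DN.union hX.compl hY.compl).compl
  rwa [Set.compl_union, compl_compl, compl_compl] at h

lemma DN.dia_iterate {N : Set ℕ} {X : Set V} (hX : DN N X) (k : ℕ) :
    DN N ((dia N)^[k] X) := by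
  induction k with
  | zero => exact hX
  | succ k ih => rw [Function.iterate_succ_apply']; exact ih.diam

/-- The member `◇◇P` of `D_M`, where `P = {b₃, ℓ₀}`, splits the complement of `◇⁴{d}`:
it contains `u₁` and misses `c₂`. -/
lemma exists_splitting (M : Set ℕ) (hM : M ⊆ EE) :
    ∃ S, DN M S ∧ V.u 0 ∈ S ∧ V.c2 ∉ S := by
  have hT : ∀ k, DN M {w | distD w ≤ k} := fun k =>
    dia_iterate_singleton_d M k ▸ DN.base.dia_iterate k
  refine ⟨dia M (dia M ({w | distD w ≤ 3} ∪ dia M {w | distD w ≤ 4}ᶜ)ᶜ),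
    ((hT 3).union (hT 4).compl.diam).compl.diam.diam, ?_, ?_⟩
  · refine ⟨.l 1, ⟨.l 0, ?_, .inr (.inl .l0l1)⟩, .inr (.inl (.lu 0))⟩
    rintro (h | ⟨v, hv, hR⟩)
    · simp [distD] at h
    · rcases hR with rfl | h | h
      · simp [distD] at hv
      · cases h <;> simp [distD] at hv
      · cases h with
        -- An edge from `ℓ₀` to the upper row would need `0 ∈ M`, but members of `𝔼` are positive.
        | lN _ hi => exact absurd (hM hi).2 (lt_irrefl 0)
        | l0l1 => simp [distD] at hv
  · have hc2 : V.c2 ∈ ({w | distD w ≤ 4}ᶜ : Set V) := by simp [distD]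
    have hn : ∀ v w, R M v w → w = .b2 ∨ w = .c2 →
        v ∈ ({w | distD w ≤ 3} ∪ dia M {w | distD w ≤ 4}ᶜ)ᶜ → False := by
      rintro v w hR hw hv
      apply hv
      have hb2 : V.b2 ∈ dia M {w | distD w ≤ 4}ᶜ := ⟨.c2, hc2, .inr (.inr .b2c2)⟩
      have hc2' : V.c2 ∈ dia M {w | distD w ≤ 4}ᶜ := subset_dia M _ hc2
      rcases hw with rfl | rfl <;> rcases hR with rfl | h | h
      · exact .inr hb2
      · cases h; exact .inl (by simp [distD])
      · cases h; exact .inr hc2'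
      · exact .inr hc2'
      · cases h; exact .inr hb2
      · cases h
    rintro ⟨v, ⟨w, hw, hwv⟩, hv⟩
    refine hn w v hwv ?_ hw
    rcases hv with rfl | h | h
    · exact .inr rfl
    · cases h; exact .inl rfl
    · cases h

/-! ### The image of `{d}` -/

/-- Every embedding of `D_M` into `D_N` fixes `{d}`. -/
theorem embedding_fixes_d (M N : Set ℕ) (hM : M ⊆ EE) (hN : N ⊆ EE)
    (u : Set V → Set V) (hu : IsEmbedding M N u) :
    u {V.d} = {V.d} := by
  obtain ⟨-, hinj, hemp, huniv, hun, hco, hdi⟩ := hu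
  have huT : ∀ k, u ((dia M)^[k] {V.d}) = (dia N)^[k] (u {V.d}) := by
    intro k
    induction k with
    | zero => rfl
    | succ k ih =>
      rw [Function.iterate_succ_apply', hdi _ (DN.base.dia_iterate k), ih,
        Function.iterate_succ_apply']
  have hne : ∀ A, DN M A → A.Nonempty → (u A).Nonempty := by
    intro A hA hA'
    by_contra h
    rw [Set.not_nonempty_iff_eq_empty] at h
    exact hA'.ne_empty (hinj A ∅ hA (DN.empty M) (h.trans hemp.symm))
  have hTc : DN M ((dia M)^[4] {V.d})ᶜ := (DN.base.dia_iterate 4).compl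
  have huTc : u ((dia M)^[4] {V.d})ᶜ = ((dia N)^[4] (u {V.d}))ᶜ := by
    rw [hco _ (DN.base.dia_iterate 4), huT]
  have hu0 : V.u 0 ∈ ((dia M)^[4] {V.d})ᶜ := by
    rw [dia_iterate_singleton_d]; simp [distD]
  have hc2 : V.c2 ∈ ((dia M)^[4] {V.d})ᶜ := by
    rw [dia_iterate_singleton_d]; simp [distD]
  obtain ⟨x, hx⟩ := hne _ DN.base ⟨V.d, rfl⟩
  by_cases hd : V.d ∈ u {V.d}
  · obtain ⟨y, hy⟩ := hne _ hTc ⟨_, hc2⟩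
    rw [huTc] at hy
    have hyd : y ≠ .d := by
      rintro rfl
      exact hy (dia_iterate_mono N _ (Nat.zero_le 4) hd)
    refine Set.Subset.antisymm (fun z hz => ?_) (by rintro _ rfl; exact hd)
    by_contra hzd
    have h1 := five_le_distA_add hz hy
    have h2 := distA_le_two hyd
    have h3 := distA_le_two hzd
    omega
  · exfalso
    have hsub : ∀ y ∈ u ((dia M)^[4] {V.d})ᶜ, y = .d := by
      intro y hy
      rw [huTc] at hy
      by_contra hyd
      have h1 := five_le_distA_add hx hy
      have h2 := distA_le_two hyd
      have h3 := distA_le_two (x := x) (by rintro rfl; exact hd hx)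
      omega
    have hmono : ∀ A B, DN M A → DN M B → A ⊆ B → u A ⊆ u B := by
      intro A B hA hB hAB
      have h := hun A B hA hB
      rw [Set.union_eq_right.2 hAB] at h
      rw [h]
      exact Set.subset_union_left
    obtain ⟨S, hS, hS1, hS2⟩ := exists_splitting M hM
    obtain ⟨p, hp⟩ := hne _ (hS.inter hTc) ⟨_, hS1, hu0⟩
    obtain ⟨q, hq⟩ := hne _ (hS.compl.inter hTc) ⟨_, hS2, hc2⟩
    have hpd := hsub p (hmono _ _ (hS.inter hTc) hTc Set.inter_subset_right hp)
    have hqd := hsub q (hmono _ _ (hS.compl.inter hTc) hTc Set.inter_subset_right hq)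
    have hp' := hmono _ _ (hS.inter hTc) hS Set.inter_subset_left hp
    have hq' := hmono _ _ (hS.compl.inter hTc) hS.compl Set.inter_subset_left hq
    rw [hco S hS] at hq'
    rw [hpd] at hp'
    rw [hqd] at hq'
    exact hq' hp'
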